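/- arXiv:2210.11104 — 4 statements merged into one kernel-verified Lean document; each statement's English description precedes it below -/
import Mathlib

section
/- Let X_1 and ε_2 be independent random variables, each uniformly distributed on [−1,1], let β ≠ 0 be a real constant, and let X_2 = βX_1 + ε_2. Define γ = max{|β|, 1/|β|}. Then (E[Var(X_1 | X_2)] · Var(X_2)) / (Var(X_1) · Var(ε_2)) = (γ² + 1)(2γ − 1) / (2γ³), where Var(X_1 | X_2) = E[(X_1 − E[X_1 | X_2])² | X_2]. -/
open MeasureTheory ProbabilityTheory
open scoped ENNReal

namespace ULM

def SS (β : ℝ) : Set (ℝ × ℝ) :=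
  {z | z.1 ∈ Set.Icc (-1 : ℝ) 1 ∧ z.2 - β * z.1 ∈ Set.Icc (-1 : ℝ) 1}

noncomputable def lo (β s : ℝ) : ℝ := max (-1) (s / β - 1 / |β|)
noncomputable def hi (β s : ℝ) : ℝ := min 1 (s / β + 1 / |β|)
noncomputable def mid (β s : ℝ) : ℝ := (lo β s + hi β s) / 2

lemma continuous_mid (β : ℝ) : Continuous (mid β) := by
  unfold mid lo hi; fun_prop

lemma compact_SS (β : ℝ) : IsCompact (SS β) := by
  have h : SS β = (fun z : ℝ × ℝ => (z.1, β * z.1 + z.2)) ''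
      (Set.Icc (-1 : ℝ) 1 ×ˢ Set.Icc (-1 : ℝ) 1) := by
    ext ⟨x, s⟩
    simp only [SS, Set.mem_ofPred_eq, Set.mem_image, Set.mem_prod, Prod.mk.injEq, Prod.exists]
    constructor
    · rintro ⟨h1, h2⟩
      exact ⟨x, s - β * x, ⟨h1, h2⟩, rfl, by ring⟩
    · rintro ⟨y, e, ⟨h1, h2⟩, rfl, rfl⟩
      exact ⟨h1, by simpa using h2⟩
  rw [h]
  exact (isCompact_Icc.prod isCompact_Icc).image (by fun_prop)

lemma mem_SS_iff {β : ℝ} (hβ : β ≠ 0) (x s : ℝ) :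
    (x, s) ∈ SS β ↔ x ∈ Set.Icc (lo β s) (hi β s) := by
  have hb : 0 < |β| := abs_pos.2 hβ
  have key : s - β * x ∈ Set.Icc (-1 : ℝ) 1 ↔ |s / β - x| ≤ 1 / |β| := by
    have : s / β - x = (s - β * x) / β := by field_simp
    rw [this, abs_div, div_le_div_iff_of_pos_right hb, abs_le, Set.mem_Icc]
  simp only [SS, Set.mem_ofPred_eq]
  rw [key, abs_le]
  simp only [lo, hi, Set.mem_Icc, max_le_iff, le_min_iff]
  constructor
  · rintro ⟨⟨h1, h2⟩, h3, h4⟩; refine ⟨⟨?_, ?_⟩, ?_, ?_⟩ <;> linarith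
  · rintro ⟨⟨h1, h2⟩, h3, h4⟩; refine ⟨⟨?_, ?_⟩, ?_, ?_⟩ <;> linarith

lemma law {Ω : Type*} [MeasurableSpace Ω] (μ : Measure Ω) [IsProbabilityMeasure μ]
    (X₁ ε₂ : Ω → ℝ) (hX₁ : Measurable X₁) (hε₂ : Measurable ε₂)
    (hindep : IndepFun X₁ ε₂ μ)
    (hu1 : Measure.map X₁ μ = (2 : ℝ≥0∞)⁻¹ • volume.restrict (Set.Icc (-1 : ℝ) 1))
    (hu2 : Measure.map ε₂ μ = (2 : ℝ≥0∞)⁻¹ • volume.restrict (Set.Icc (-1 : ℝ) 1))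
    (β : ℝ) :
    Measure.map (fun ω => (X₁ ω, β * X₁ ω + ε₂ ω)) μ =
      ((2 : ℝ≥0∞)⁻¹ * (2 : ℝ≥0∞)⁻¹) • (volume : Measure (ℝ × ℝ)).restrict (SS β) := by
  have h1 := (indepFun_iff_map_prod_eq_prod_map_map hX₁.aemeasurable hε₂.aemeasurable).1 hindep
  rw [hu1, hu2, Measure.prod_smul_left, Measure.prod_smul_right, Measure.prod_restrict,
    smul_smul] at h1
  have hΦ : MeasurePreserving (fun p : ℝ × ℝ => (p.1, β * p.1 + p.2))
      ((volume : Measure ℝ).prod volume) ((volume : Measure ℝ).prod volume) := by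
    refine MeasurePreserving.skew_product (f := id) (g := fun x e => β * x + e)
      (MeasurePreserving.id _) (by fun_prop) ?_
    filter_upwards with a
    exact map_add_left_eq_self volume (β * a)
  have hpre : (fun p : ℝ × ℝ => (p.1, β * p.1 + p.2)) ⁻¹' (SS β) =
      Set.Icc (-1 : ℝ) 1 ×ˢ Set.Icc (-1 : ℝ) 1 := by
    ext ⟨x, e⟩
    simp [SS]
    constructor
    · rintro ⟨⟨a, b⟩, c, d⟩; refine ⟨⟨?_, ?_⟩, ?_, ?_⟩ <;> linarith
    · rintro ⟨⟨a, b⟩, c, d⟩; refine ⟨⟨?_, ?_⟩, ?_, ?_⟩ <;> linarith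
  have h2 := (hΦ.restrict_preimage (compact_SS β).measurableSet).map_eq
  rw [hpre] at h2
  have h3 : (fun ω => (X₁ ω, β * X₁ ω + ε₂ ω)) =
    (fun p : ℝ × ℝ => (p.1, β * p.1 + p.2)) ∘ (fun ω => (X₁ ω, ε₂ ω)) := rfl
  rw [h3, ← Measure.map_map hΦ.measurable (hX₁.prodMk hε₂), h1, Measure.map_smul, h2]
  rfl

lemma fub {β : ℝ} (hβ : β ≠ 0) (F : ℝ × ℝ → ℝ) (hF : IntegrableOn F (SS β)) :
    ∫ z in SS β, F z = ∫ s, ∫ x in Set.Icc (lo β s) (hi β s), F (x, s) := by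
  have hm := (compact_SS β).measurableSet
  rw [← integral_indicator hm, Measure.volume_eq_prod, integral_prod_symm]
  · congr 1
    ext s
    rw [← integral_indicator measurableSet_Icc]
    congr 1
    ext x
    by_cases h : (x, s) ∈ SS β
    · rw [Set.indicator_of_mem h, Set.indicator_of_mem ((mem_SS_iff hβ x s).1 h)]
    · rw [Set.indicator_of_notMem h,
        Set.indicator_of_notMem (fun h' => h ((mem_SS_iff hβ x s).2 h'))]
  · rw [← Measure.volume_eq_prod]
    exact (integrable_indicator_iff hm).2 hF

lemma inner1 (a b : ℝ) : ∫ x in Set.Icc a b, (x - (a + b) / 2) = 0 := by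
  rcases le_or_gt a b with h | h
  · rw [integral_Icc_eq_integral_Ioc, ← intervalIntegral.integral_of_le h,
      intervalIntegral.integral_sub (by simp) (by simp)]
    simp
    ring
  · simp [Set.Icc_eq_empty (not_le.2 h)]

lemma inner2 (a b : ℝ) : ∫ x in Set.Icc a b, (x - (a + b) / 2) ^ 2 =
    (max (b - a) 0) ^ 3 / 12 := by
  rcases le_or_gt a b with h | h
  · rw [integral_Icc_eq_integral_Ioc, ← intervalIntegral.integral_of_le h,
      intervalIntegral.integral_comp_sub_right (fun x => x ^ 2), integral_pow,
      max_eq_left (by linarith)]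
    norm_num
    ring
  · rw [max_eq_right (by linarith)]
    simp [Set.Icc_eq_empty (not_le.2 h)]

lemma outer1 (p q : ℝ) (hp : 0 < p) (hpq : p ≤ q) :
    ∫ u : ℝ, (max (min (2 * p) (p + q - |u|)) 0) ^ 3 = 16 * q * p ^ 3 - 8 * p ^ 4 := by
  rw [integral_comp_abs (f := fun u => (max (min (2 * p) (p + q - u)) 0) ^ 3)]
  have h0 : ∫ u in Set.Ioi (0 : ℝ), (max (min (2 * p) (p + q - u)) 0) ^ 3 =
      ∫ u in Set.Ioc (0 : ℝ) (p + q), (max (min (2 * p) (p + q - u)) 0) ^ 3 := by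
    apply setIntegral_eq_of_subset_of_forall_sdiff_eq_zero measurableSet_Ioi
    · exact Set.Ioc_subset_Ioi_self
    · rintro u ⟨hu, hu'⟩
      have : p + q < u := by
        by_contra hc
        exact hu' ⟨hu, not_lt.1 hc⟩
      rw [max_eq_right ((min_le_right _ _).trans (by linarith))]
      norm_num
  have hc : Continuous fun u : ℝ => (max (min (2 * p) (p + q - u)) 0) ^ 3 := by fun_prop
  rw [h0, ← intervalIntegral.integral_of_le (by linarith),
    ← intervalIntegral.integral_add_adjacent_intervals (b := q - p)
      (hc.intervalIntegrable _ _) (hc.intervalIntegrable _ _)]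
  have e1 : ∫ u in (0 : ℝ)..(q - p), (max (min (2 * p) (p + q - u)) 0) ^ 3 =
      ∫ u in (0 : ℝ)..(q - p), (2 * p) ^ 3 := by
    apply intervalIntegral.integral_congr
    intro u hu
    rw [Set.uIcc_of_le (by linarith)] at hu
    simp only
    rw [min_eq_left (by linarith [hu.2]), max_eq_left (by linarith)]
  have e2 : ∫ u in (q - p)..(p + q), (max (min (2 * p) (p + q - u)) 0) ^ 3 =
      ∫ u in (q - p)..(p + q), (p + q - u) ^ 3 := by
    apply intervalIntegral.integral_congr
    intro u hu
    rw [Set.uIcc_of_le (by linarith)] at hu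
    simp only
    rw [min_eq_right (by linarith [hu.1]), max_eq_left (by linarith [hu.2])]
  rw [e1, e2, intervalIntegral.integral_comp_sub_left (fun x => x ^ 3), integral_pow,
    intervalIntegral.integral_const]
  simp only [smul_eq_mul]
  norm_num
  ring

lemma len_eq (c u : ℝ) (hc : 0 < c) : min 1 (u + c) - max (-1) (u - c) =
    min (2 * min 1 c) (min 1 c + max 1 c - |u|) := by
  rcases le_total 1 c with h | h <;> rcases le_total 0 u with h' | h' <;>
  simp only [h, h', min_eq_left, min_eq_right, max_eq_left, max_eq_right, abs_of_nonneg,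
    abs_of_nonpos] <;>
  simp only [min_def, max_def] <;> split_ifs <;> linarith

lemma outer {β : ℝ} (hβ : β ≠ 0) :
    ∫ s : ℝ, (max (hi β s - lo β s) 0) ^ 3 / 12 =
      |β| * (16 * max 1 (1 / |β|) * min 1 (1 / |β|) ^ 3 - 8 * min 1 (1 / |β|) ^ 4) / 12 := by
  have hc : 0 < 1 / |β| := by positivity
  rw [integral_div]
  unfold hi lo
  rw [Measure.integral_comp_div
    (fun u => (max (min 1 (u + 1 / |β|) - max (-1) (u - 1 / |β|)) 0) ^ 3) β]
  simp only [len_eq _ _ hc]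
  rw [outer1 _ _ (lt_min one_pos hc) (min_le_left _ _ |>.trans (le_max_left _ _)), smul_eq_mul]

lemma var_unif {Ω : Type*} [MeasurableSpace Ω] (μ : Measure Ω) [IsProbabilityMeasure μ]
    (X : Ω → ℝ) (hX : Measurable X)
    (hu : Measure.map X μ = (2 : ℝ≥0∞)⁻¹ • volume.restrict (Set.Icc (-1 : ℝ) 1)) :
    MemLp X 2 μ ∧ variance X μ = 1 / 3 := by
  have hae : ∀ᵐ x ∂(Measure.map X μ), x ∈ Set.Icc (-1 : ℝ) 1 := by
    rw [hu]
    exact Measure.ae_smul_measure (ae_restrict_mem measurableSet_Icc) _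
  have hb : ∀ᵐ ω ∂μ, X ω ∈ Set.Icc (-1 : ℝ) 1 := ae_of_ae_map hX.aemeasurable hae
  have hL : MemLp X 2 μ := memLp_of_bounded hb hX.aestronglyMeasurable 2
  refine ⟨hL, ?_⟩
  have hint : ∀ n : ℕ, ∫ ω, X ω ^ n ∂μ = 2⁻¹ * ∫ x in (-1 : ℝ)..1, x ^ n := by
    intro n
    rw [← integral_map (f := fun x : ℝ => x ^ n) hX.aemeasurable
      (by fun_prop), hu, integral_smul_measure,
      integral_Icc_eq_integral_Ioc, ← intervalIntegral.integral_of_le (by norm_num)]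
    simp
  have i1 := hint 1
  have i2 := hint 2
  simp only [pow_one] at i1
  rw [variance_eq_sub hL]
  simp only [Pi.pow_apply]
  rw [i1, i2]
  simp
  norm_num

end ULM

open ULM in
/-- For the linear model `X₂ = β X₁ + ε₂` with `X₁, ε₂` i.i.d. uniform on `[-1,1]`
and `β ≠ 0`, the ratio `(E[Var(X₁ | X₂)] · Var(X₂)) / (Var(X₁) · Var(ε₂))` equals
`(γ² + 1)(2γ − 1) / (2γ³)` where `γ = max{|β|, 1/|β|}`. -/
theorem uniform_linear_model_variance_ratio
    {Ω : Type*} [MeasurableSpace Ω] (μ : Measure Ω) [IsProbabilityMeasure μ]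
    (X₁ ε₂ : Ω → ℝ) (hX₁ : Measurable X₁) (hε₂ : Measurable ε₂)
    (hindep : IndepFun X₁ ε₂ μ)
    (hu1 : Measure.map X₁ μ = (2 : ℝ≥0∞)⁻¹ • volume.restrict (Set.Icc (-1 : ℝ) 1))
    (hu2 : Measure.map ε₂ μ = (2 : ℝ≥0∞)⁻¹ • volume.restrict (Set.Icc (-1 : ℝ) 1))
    (β : ℝ) (hβ : β ≠ 0)
    (X₂ : Ω → ℝ) (hX₂ : X₂ = fun ω => β * X₁ ω + ε₂ ω)
    (γ : ℝ) (hγ : γ = max |β| (1 / |β|)) :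
    (∫ ω, (μ[(fun ω' =>
          (X₁ ω' - (μ[X₁ | MeasurableSpace.comap X₂ Real.measurableSpace]) ω') ^ 2) |
        MeasurableSpace.comap X₂ Real.measurableSpace]) ω ∂μ) * variance X₂ μ /
      (variance X₁ μ * variance ε₂ μ) =
      (γ ^ 2 + 1) * (2 * γ - 1) / (2 * γ ^ 3) := by
  have hm0 : Measurable X₂ := by rw [hX₂]; fun_prop
  have hle : MeasurableSpace.comap X₂ Real.measurableSpace ≤ ‹MeasurableSpace Ω› := hm0.comap_le
  have hlaw := law μ X₁ ε₂ hX₁ hε₂ hindep hu1 hu2 β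
  have hfun : (fun ω => (X₁ ω, β * X₁ ω + ε₂ ω)) = fun ω => (X₁ ω, X₂ ω) := by rw [hX₂]
  rw [hfun] at hlaw
  have hpm : Measurable (fun ω => (X₁ ω, X₂ ω)) := hX₁.prodMk hm0
  have hfin : ((2 : ℝ≥0∞)⁻¹ * (2 : ℝ≥0∞)⁻¹) ≠ ⊤ := by simp [ENNReal.mul_eq_top]
  -- integrability transfer
  have hI : ∀ F : ℝ × ℝ → ℝ, Continuous F → Integrable (fun ω => F (X₁ ω, X₂ ω)) μ := by
    intro F hF
    have h : Integrable F (Measure.map (fun ω => (X₁ ω, X₂ ω)) μ) := by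
      rw [hlaw]
      exact Integrable.smul_measure (hF.continuousOn.integrableOn_compact (compact_SS β)) hfin
    exact h.comp_measurable hpm
  have hE : ∀ F : ℝ × ℝ → ℝ, Measurable F → IntegrableOn F (SS β) →
      ∫ ω, F (X₁ ω, X₂ ω) ∂μ =
        4⁻¹ * ∫ s, ∫ x in Set.Icc (lo β s) (hi β s), F (x, s) := by
    intro F hF hFi
    rw [← integral_map (f := F) hpm.aemeasurable hF.aestronglyMeasurable, hlaw,
      integral_smul_measure, fub hβ F hFi]
    simp
    norm_num
  have hcm := continuous_mid β
  have iX : Integrable X₁ μ := hI (fun z => z.1) continuous_fst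
  have iM : Integrable (fun ω => mid β (X₂ ω)) μ := hI (fun z => mid β z.2) (by fun_prop)
  have hce : (fun ω => mid β (X₂ ω)) =ᵐ[μ]
      μ[X₁ | MeasurableSpace.comap X₂ Real.measurableSpace] := by
    refine ae_eq_condExp_of_forall_setIntegral_eq hle iX (fun s _ _ => iM.integrableOn) ?_ ?_
    · rintro s ⟨T, hT, rfl⟩ -
      have hms : MeasurableSet (X₂ ⁻¹' T) := hm0 hT
      symm
      rw [← sub_eq_zero, ← integral_sub iX.integrableOn iM.integrableOn,
        ← integral_indicator hms]
      have hTT : MeasurableSet ((Prod.snd : ℝ × ℝ → ℝ) ⁻¹' T) := measurable_snd hT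
      have := hE (((Prod.snd : ℝ × ℝ → ℝ) ⁻¹' T).indicator (fun z => z.1 - mid β z.2))
        (Measurable.indicator (by fun_prop) hTT)
        (Integrable.indicator (Continuous.continuousOn (by fun_prop) |>.integrableOn_compact
          (compact_SS β)) hTT)
      refine Eq.trans ?_ (this.trans ?_)
      · rfl
      · have hz : ∀ s, ∫ x in Set.Icc (lo β s) (hi β s),
          ((Prod.snd : ℝ × ℝ → ℝ) ⁻¹' T).indicator (fun z => z.1 - mid β z.2) (x, s) = 0 := by
          intro s
          by_cases hs : s ∈ T
          · have : ∀ x : ℝ, ((Prod.snd : ℝ × ℝ → ℝ) ⁻¹' T).indicator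
              (fun z => z.1 - mid β z.2) (x, s) = x - (lo β s + hi β s) / 2 := by
              intro x
              rw [Set.indicator_of_mem (by exact hs)]
              rfl
            simp only [this]
            exact inner1 _ _
          · have : ∀ x : ℝ, ((Prod.snd : ℝ × ℝ → ℝ) ⁻¹' T).indicator
              (fun z => z.1 - mid β z.2) (x, s) = 0 := by
              intro x
              rw [Set.indicator_of_notMem (by exact hs)]
            simp only [this]
            simp
        simp only [hz]
        simp
    · have : Measurable[MeasurableSpace.comap X₂ Real.measurableSpace]
          (fun ω => mid β (X₂ ω)) := hcm.measurable.comp (comap_measurable X₂)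
      exact this.stronglyMeasurable.aestronglyMeasurable
  have hEV : (∫ ω, (μ[(fun ω' =>
          (X₁ ω' - (μ[X₁ | MeasurableSpace.comap X₂ Real.measurableSpace]) ω') ^ 2) |
        MeasurableSpace.comap X₂ Real.measurableSpace]) ω ∂μ) =
      4⁻¹ * (|β| * (16 * max 1 (1 / |β|) * min 1 (1 / |β|) ^ 3
        - 8 * min 1 (1 / |β|) ^ 4) / 12) := by
    rw [integral_condExp hle]
    have h1 : ∫ ω', (X₁ ω' -
        (μ[X₁ | MeasurableSpace.comap X₂ Real.measurableSpace]) ω') ^ 2 ∂μ =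
        ∫ ω', (X₁ ω' - mid β (X₂ ω')) ^ 2 ∂μ := by
      apply integral_congr_ae
      filter_upwards [hce] with ω hω
      rw [← hω]
    have hcF : Continuous (fun z : ℝ × ℝ => (z.1 - mid β z.2) ^ 2) := by fun_prop
    rw [h1, hE (fun z => (z.1 - mid β z.2) ^ 2) hcF.measurable
      (hcF.continuousOn.integrableOn_compact (compact_SS β)), ← outer hβ]
    congr 2
    ext s
    exact inner2 _ _
  obtain ⟨L1, v1⟩ := var_unif μ X₁ hX₁ hu1
  obtain ⟨L2, v2⟩ := var_unif μ ε₂ hε₂ hu2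
  have v3 : variance X₂ μ = (β ^ 2 + 1) / 3 := by
    have hi' : IndepFun (fun ω => β * X₁ ω) ε₂ μ :=
      hindep.comp (φ := fun x => β * x) (ψ := id) (by fun_prop) measurable_id
    have : X₂ = (fun ω => β * X₁ ω) + ε₂ := by rw [hX₂]; rfl
    rw [this, hi'.variance_add (L1.const_mul β) L2, variance_const_mul, v1, v2]
    ring
  rw [hEV, v1, v2, v3, hγ, ← sq_abs β]
  have hb : 0 < |β| := abs_pos.2 hβ
  generalize |β| = b at hb
  rcases le_total 1 b with h | h
  · have h' : 1 / b ≤ 1 := by rw [div_le_one hb]; exact h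
    rw [max_eq_left h', min_eq_right h', max_eq_left (h'.trans h)]
    field_simp
    ring
  · have h' : 1 ≤ 1 / b := by rw [le_div_iff₀ hb]; linarith
    rw [max_eq_right h', min_eq_left h', max_eq_right (h.trans h')]
    field_simp
    ring
end

section
/- Let X_1 and ε_2 be independent random variables, each uniformly distributed on [−1,1], let β > 0, and let X_2 = βX_1 + ε_2. Define A = min{1, (X_2+1)/β} and B = max{−1, (X_2−1)/β}. Then almost surely E[X_1 | X_2] = (A + B)/2 and Var(X_1 | X_2) = (A − B)²/12; that is, conditionally on X_2, the variable X_1 has the conditional mean and conditional variance of a uniform distribution on [B, A]. -/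
open MeasureTheory ProbabilityTheory
open scoped ENNReal

noncomputable def ulmA (β y : ℝ) : ℝ := min 1 ((y + 1) / β)
noncomputable def ulmB (β y : ℝ) : ℝ := max (-1) ((y - 1) / β)

lemma ulm_mem {β : ℝ} (hβ : 0 < β) (x y : ℝ) :
    (ulmB β y ≤ x ∧ x ≤ ulmA β y) ↔
      ((-1 ≤ x ∧ x ≤ 1) ∧ (-1 ≤ y - β * x ∧ y - β * x ≤ 1)) := by
  unfold ulmA ulmB
  rw [max_le_iff, le_min_iff, div_le_iff₀ hβ, le_div_iff₀ hβ]
  constructor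
  · rintro ⟨⟨h1, h2⟩, h3, h4⟩
    exact ⟨⟨h1, h3⟩, by linarith, by linarith⟩
  · rintro ⟨⟨h1, h2⟩, h3, h4⟩
    exact ⟨⟨h1, by linarith⟩, h2, by linarith⟩

lemma ulmA_meas (β : ℝ) : Measurable (ulmA β) := by unfold ulmA; fun_prop
lemma ulmB_meas (β : ℝ) : Measurable (ulmB β) := by unfold ulmB; fun_prop

lemma ulm_plane {β : ℝ} (hβ : 0 < β) (F : ℝ × ℝ → ℝ) (hF : Measurable F) (C : ℝ)
    (hC : ∀ x y, ulmB β y ≤ x → x ≤ ulmA β y → |F (x, y)| ≤ C)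
    (h0 : ∀ y, ulmB β y ≤ ulmA β y → ∫ x in (ulmB β y)..(ulmA β y), F (x, y) = 0) :
    ∫ z in Set.Icc (-1 : ℝ) 1 ×ˢ Set.Icc (-1 : ℝ) 1, F (z.1, β * z.1 + z.2)
      ∂((volume : Measure ℝ).prod (volume : Measure ℝ)) = 0 := by
  set D : Set (ℝ × ℝ) := {z | ulmB β z.2 ≤ z.1 ∧ z.1 ≤ ulmA β z.2} with hD
  have hDm : MeasurableSet D :=
    (measurableSet_le ((ulmB_meas β).comp measurable_snd) measurable_fst).inter
      (measurableSet_le measurable_fst ((ulmA_meas β).comp measurable_snd))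
  have hT : MeasurePreserving (fun z : ℝ × ℝ => (z.1, β * z.1 + z.2))
      ((volume : Measure ℝ).prod (volume : Measure ℝ))
      ((volume : Measure ℝ).prod (volume : Measure ℝ)) := by
    refine MeasurePreserving.skew_product (f := id) (g := fun x e => β * x + e)
      (MeasurePreserving.id _) (by fun_prop) ?_
    exact Filter.Eventually.of_forall fun x => map_add_left_eq_self volume (β * x)
  have hind : Measurable (D.indicator F) := hF.indicator hDm
  rw [← integral_indicator (measurableSet_Icc.prod measurableSet_Icc)]
  have h1 : (Set.Icc (-1 : ℝ) 1 ×ˢ Set.Icc (-1 : ℝ) 1).indicator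
      (fun z : ℝ × ℝ => F (z.1, β * z.1 + z.2)) =
      fun z => D.indicator F (z.1, β * z.1 + z.2) := by
    funext z
    have : z ∈ Set.Icc (-1 : ℝ) 1 ×ˢ Set.Icc (-1 : ℝ) 1 ↔ (z.1, β * z.1 + z.2) ∈ D := by
      simp only [hD, Set.mem_ofPred_eq, ulm_mem hβ, Set.mem_prod, Set.mem_Icc,
        add_sub_cancel_left]
    by_cases h : z ∈ Set.Icc (-1 : ℝ) 1 ×ˢ Set.Icc (-1 : ℝ) 1
    · rw [Set.indicator_of_mem h, Set.indicator_of_mem (this.1 h)]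
    · rw [Set.indicator_of_notMem h, Set.indicator_of_notMem (fun h' => h (this.2 h'))]
  rw [h1, ← integral_map (φ := fun z : ℝ × ℝ => (z.1, β * z.1 + z.2)) (f := D.indicator F)
    hT.measurable.aemeasurable hind.aestronglyMeasurable, hT.map_eq]
  have hDsub : D ⊆ Set.Icc (-1 : ℝ) 1 ×ˢ Set.Icc (-(β + 1)) (β + 1) := by
    rintro ⟨x, y⟩ h
    obtain ⟨⟨a, b⟩, c, d⟩ := (ulm_mem hβ x y).1 h
    refine ⟨⟨a, b⟩, ?_, ?_⟩ <;> simp only <;> nlinarith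
  have hDfin : ((volume : Measure ℝ).prod (volume : Measure ℝ)) D < ∞ := by
    refine (measure_mono hDsub).trans_lt ?_
    rw [Measure.prod_prod, Real.volume_Icc, Real.volume_Icc]
    exact ENNReal.mul_lt_top ENNReal.ofReal_lt_top ENNReal.ofReal_lt_top
  have hint : Integrable (D.indicator F) ((volume : Measure ℝ).prod (volume : Measure ℝ)) := by
    rw [integrable_indicator_iff hDm]
    refine Measure.integrableOn_of_bounded (M := C) hDfin.ne hF.aestronglyMeasurable ?_
    filter_upwards [ae_restrict_mem hDm] with z hz
    exact hC z.1 z.2 hz.1 hz.2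
  rw [integral_prod_symm _ hint]
  have : ∀ y, ∫ x, D.indicator F (x, y) = 0 := by
    intro y
    have h2 : (fun x => D.indicator F (x, y)) =
        (Set.Icc (ulmB β y) (ulmA β y)).indicator (fun x => F (x, y)) := by
      funext x; simp [Set.indicator, hD]
    rw [h2, integral_indicator measurableSet_Icc]
    by_cases h : ulmB β y ≤ ulmA β y
    · rw [integral_Icc_eq_integral_Ioc, ← intervalIntegral.integral_of_le h, h0 y h]
    · rw [Set.Icc_eq_empty h]; simp
  simp [this]

lemma ulm_cond {Ω : Type*} [MeasurableSpace Ω] (μ : Measure Ω) [IsProbabilityMeasure μ]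
    (X₁ ε₂ : Ω → ℝ) (hX₁ : Measurable X₁) (hε₂ : Measurable ε₂)
    (hindep : IndepFun X₁ ε₂ μ)
    (hu1 : Measure.map X₁ μ = (2 : ℝ≥0∞)⁻¹ • volume.restrict (Set.Icc (-1 : ℝ) 1))
    (hu2 : Measure.map ε₂ μ = (2 : ℝ≥0∞)⁻¹ • volume.restrict (Set.Icc (-1 : ℝ) 1))
    (β : ℝ) (hβ : 0 < β)
    (X₂ : Ω → ℝ) (hX₂ : X₂ = fun ω => β * X₁ ω + ε₂ ω)
    (p : ℝ × ℝ → ℝ) (hp : Measurable p) (q : ℝ → ℝ) (hq : Measurable q) (C : ℝ)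
    (hpC : ∀ x y, ulmB β y ≤ x → x ≤ ulmA β y → |p (x, y)| ≤ C)
    (hqC : ∀ x y, ulmB β y ≤ x → x ≤ ulmA β y → |q y| ≤ C)
    (h0 : ∀ y, ulmB β y ≤ ulmA β y →
      ∫ x in (ulmB β y)..(ulmA β y), (p (x, y) - q y) = 0) :
    μ[(fun ω => p (X₁ ω, X₂ ω)) | MeasurableSpace.comap X₂ Real.measurableSpace] =ᵐ[μ]
      fun ω => q (X₂ ω) := by
  have hX₂m : Measurable X₂ := by rw [hX₂]; fun_prop
  have hI : ∀ (X : Ω → ℝ), Measurable X →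
      Measure.map X μ = (2 : ℝ≥0∞)⁻¹ • volume.restrict (Set.Icc (-1 : ℝ) 1) →
      ∀ᵐ ω ∂μ, X ω ∈ Set.Icc (-1 : ℝ) 1 := by
    intro X hX h
    refine ae_of_ae_map hX.aemeasurable ?_
    rw [h]
    exact Measure.ae_smul_measure (ae_restrict_mem measurableSet_Icc) _
  have hmem : ∀ᵐ ω ∂μ, ulmB β (X₂ ω) ≤ X₁ ω ∧ X₁ ω ≤ ulmA β (X₂ ω) := by
    filter_upwards [hI X₁ hX₁ hu1, hI ε₂ hε₂ hu2] with ω a b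
    rw [ulm_mem hβ, hX₂]
    simpa using ⟨a, b⟩
  have hpint : Integrable (fun ω => p (X₁ ω, X₂ ω)) μ := by
    refine Integrable.of_bound (C := C) (Measurable.aestronglyMeasurable (by fun_prop)) ?_
    filter_upwards [hmem] with ω h using hpC _ _ h.1 h.2
  have hqint : Integrable (fun ω => q (X₂ ω)) μ := by
    refine Integrable.of_bound (C := C) (Measurable.aestronglyMeasurable (by fun_prop)) ?_
    filter_upwards [hmem] with ω h using hqC _ _ h.1 h.2
  symm
  refine ae_eq_condExp_of_forall_setIntegral_eq hX₂m.comap_le hpint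
    (fun s _ _ => hqint.integrableOn) ?_ ?_
  · rintro s ⟨S, hS, rfl⟩ -
    rw [eq_comm, ← sub_eq_zero, ← integral_sub hpint.integrableOn hqint.integrableOn,
      ← integral_indicator (hX₂m hS)]
    set F : ℝ × ℝ → ℝ := fun z => (S.indicator 1 z.2) * (p z - q z.2) with hFdef
    have h1S : Measurable (S.indicator (1 : ℝ → ℝ)) := measurable_one.indicator hS
    have hF : Measurable F := by fun_prop
    have h1 : (X₂ ⁻¹' S).indicator (fun ω => p (X₁ ω, X₂ ω) - q (X₂ ω)) =
        fun ω => F ((X₁ ω, ε₂ ω).1, β * (X₁ ω, ε₂ ω).1 + (X₁ ω, ε₂ ω).2) := by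
      funext ω
      have : X₂ ω = β * X₁ ω + ε₂ ω := by rw [hX₂]
      simp only [hFdef, ← this]
      by_cases h : X₂ ω ∈ S
      · simp [Set.indicator, h]
      · simp [Set.indicator, h]
    rw [h1, ← integral_map (φ := fun ω => (X₁ ω, ε₂ ω))
      (f := fun z : ℝ × ℝ => F (z.1, β * z.1 + z.2)) (by fun_prop)
      (Measurable.aestronglyMeasurable (by fun_prop)),
      (indepFun_iff_map_prod_eq_prod_map_map hX₁.aemeasurable hε₂.aemeasurable).1 hindep,
      hu1, hu2, Measure.prod_smul_left, Measure.prod_smul_right, Measure.prod_restrict,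
      integral_smul_measure, integral_smul_measure, ulm_plane hβ F hF (C + C)]
    · simp
    · intro x y h h'
      have a := hpC x y h h'
      have b := hqC x y h h'
      have c := abs_sub (p (x, y)) (q y)
      by_cases hy : y ∈ S
      · simp only [hFdef, Set.indicator, hy, if_true, Pi.one_apply, one_mul]
        linarith
      · simp only [hFdef, Set.indicator, hy, if_false, zero_mul, abs_zero]
        linarith [abs_nonneg (q y)]
    · intro y h
      simp only [hFdef]
      rw [intervalIntegral.integral_const_mul, h0 y h, mul_zero]
  · exact (hq.comp (comap_measurable X₂)).aestronglyMeasurable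

/-- For the linear model `X₂ = β X₁ + ε₂` with `X₁, ε₂` i.i.d. uniform on `[-1,1]`
and `β > 0`, setting `A = min{1, (X₂+1)/β}` and `B = max{−1, (X₂−1)/β}`, one has
almost surely `E[X₁ | X₂] = (A + B)/2` and `Var(X₁ | X₂) = (A − B)²/12`, i.e. the
conditional mean and variance of a uniform distribution on `[B, A]`. -/
theorem uniform_linear_model_conditional_mean_and_variance
    {Ω : Type*} [MeasurableSpace Ω] (μ : Measure Ω) [IsProbabilityMeasure μ]
    (X₁ ε₂ : Ω → ℝ) (hX₁ : Measurable X₁) (hε₂ : Measurable ε₂)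
    (hindep : IndepFun X₁ ε₂ μ)
    (hu1 : Measure.map X₁ μ = (2 : ℝ≥0∞)⁻¹ • volume.restrict (Set.Icc (-1 : ℝ) 1))
    (hu2 : Measure.map ε₂ μ = (2 : ℝ≥0∞)⁻¹ • volume.restrict (Set.Icc (-1 : ℝ) 1))
    (β : ℝ) (hβ : 0 < β)
    (X₂ : Ω → ℝ) (hX₂ : X₂ = fun ω => β * X₁ ω + ε₂ ω)
    (A B : Ω → ℝ)
    (hA : A = fun ω => min 1 ((X₂ ω + 1) / β))
    (hB : B = fun ω => max (-1) ((X₂ ω - 1) / β)) :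
    (μ[X₁ | MeasurableSpace.comap X₂ Real.measurableSpace] =ᵐ[μ]
        fun ω => (A ω + B ω) / 2) ∧
    (μ[(fun ω =>
          (X₁ ω - (μ[X₁ | MeasurableSpace.comap X₂ Real.measurableSpace]) ω) ^ 2) |
        MeasurableSpace.comap X₂ Real.measurableSpace] =ᵐ[μ]
        fun ω => (A ω - B ω) ^ 2 / 12) := by
  have hA' : ∀ ω, A ω = ulmA β (X₂ ω) := fun ω => by rw [hA]; rfl
  have hB' : ∀ ω, B ω = ulmB β (X₂ ω) := fun ω => by rw [hB]; rfl
  have mA := ulmA_meas β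
  have mB := ulmB_meas β
  have bA : ∀ y, ulmA β y ≤ 1 := fun y => min_le_left _ _
  have bB : ∀ y, -1 ≤ ulmB β y := fun y => le_max_left _ _
  have e1 : μ[X₁ | MeasurableSpace.comap X₂ Real.measurableSpace] =ᵐ[μ]
      fun ω => (A ω + B ω) / 2 := by
    have := ulm_cond μ X₁ ε₂ hX₁ hε₂ hindep hu1 hu2 β hβ X₂ hX₂ (fun z => z.1) (by fun_prop)
      (fun y => (ulmA β y + ulmB β y) / 2) (by fun_prop) 1
      (fun x y h h' => by rw [abs_le]; constructor <;> linarith [bA y, bB y])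
      (fun x y h h' => by rw [abs_le]; constructor <;> linarith [bA y, bB y])
      (fun y h => by
        rw [intervalIntegral.integral_sub (by simp) (by simp)]
        simp
        ring)
    simpa only [hA', hB'] using this
  refine ⟨e1, ?_⟩
  have e2 := ulm_cond μ X₁ ε₂ hX₁ hε₂ hindep hu1 hu2 β hβ X₂ hX₂
      (fun z => (z.1 - (ulmA β z.2 + ulmB β z.2) / 2) ^ 2) (by fun_prop)
      (fun y => (ulmA β y - ulmB β y) ^ 2 / 12) (by fun_prop) 1
      (fun x y h h' => by
        rw [abs_of_nonneg (by positivity), sq_le_one_iff_abs_le_one, abs_le]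
        constructor <;> linarith [bA y, bB y])
      (fun x y h h' => by
        rw [abs_of_nonneg (by positivity)]; nlinarith [bA y, bB y])
      (fun y h => by
        rw [intervalIntegral.integral_sub
          (Continuous.intervalIntegrable (by dsimp only; fun_prop) _ _) (by simp)]
        simp only [intervalIntegral.integral_comp_sub_right (fun x : ℝ => x ^ 2)]
        simp
        ring)
  refine (condExp_congr_ae ?_).trans (e2.trans ?_)
  · filter_upwards [e1] with ω h
    rw [h, hA', hB']
  · exact Filter.Eventually.of_forall fun ω => by simp only [hA', hB']
end

section
/- Let X_1 and ε_2 be independent integrable random variables, let β ≠ 0, suppose that βX_1 and ε_2 have the same distribution, and let X_2 = βX_1 + ε_2. Then almost surely E[X_1 | X_2] = X_2/(2β); that is, the conditional expectation of X_1 given X_2 is linear in X_2. -/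
open MeasureTheory ProbabilityTheory

/-- If `X₁` and `ε₂` are independent integrable random variables, `β ≠ 0`, `β X₁` has
the same distribution as `ε₂`, and `X₂ = β X₁ + ε₂`, then almost surely
`E[X₁ | X₂] = X₂ / (2β)`. -/
theorem condexp_linear_of_eq_distrib
    {Ω : Type*} [MeasurableSpace Ω] (μ : Measure Ω) [IsProbabilityMeasure μ]
    (X₁ ε₂ : Ω → ℝ) (hX₁ : Measurable X₁) (hε₂ : Measurable ε₂)
    (hint₁ : Integrable X₁ μ) (hint₂ : Integrable ε₂ μ)
    (hindep : IndepFun X₁ ε₂ μ)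
    (β : ℝ) (hβ : β ≠ 0)
    (hdist : Measure.map (fun ω => β * X₁ ω) μ = Measure.map ε₂ μ)
    (X₂ : Ω → ℝ) (hX₂ : X₂ = fun ω => β * X₁ ω + ε₂ ω) :
    μ[X₁ | MeasurableSpace.comap X₂ Real.measurableSpace] =ᵐ[μ]
      fun ω => X₂ ω / (2 * β) := by
  set Y : Ω → ℝ := fun ω => β * X₁ ω with hY
  have hYm : Measurable Y := hX₁.const_mul β
  have hYi : Integrable Y μ := hint₁.const_mul β
  have hX₂m : Measurable X₂ := by rw [hX₂]; exact hYm.add hε₂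
  have hX₂i : Integrable X₂ μ := by rw [hX₂]; exact hYi.add hint₂
  have hind : IndepFun Y ε₂ μ :=
    hindep.comp (φ := fun x => β * x) (ψ := id) (measurable_const_mul β) measurable_id
  have hid : IdentDistrib Y ε₂ μ μ := ⟨hYm.aemeasurable, hε₂.aemeasurable, hdist⟩
  have hpair := hid.prodMk hid.symm hind hind.symm
  have hm : MeasurableSpace.comap X₂ Real.measurableSpace ≤ ‹MeasurableSpace Ω› :=
    hX₂m.comap_le
  symm
  refine ae_eq_condExp_of_forall_setIntegral_eq hm hint₁
    (fun s _ _ => (hX₂i.div_const _).integrableOn) ?_ ?_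
  · rintro s ⟨B, hB, rfl⟩ -
    have hs : MeasurableSet (X₂ ⁻¹' B) := hX₂m hB
    have hC : MeasurableSet {p : ℝ × ℝ | p.1 + p.2 ∈ B} :=
      (measurable_fst.add measurable_snd) hB
    have key : ∫ ω in X₂ ⁻¹' B, Y ω ∂μ = ∫ ω in X₂ ⁻¹' B, ε₂ ω ∂μ := by
      have h := (hpair.comp
        (u := Set.indicator {p : ℝ × ℝ | p.1 + p.2 ∈ B} (fun p => p.1))
        (measurable_fst.indicator hC)).integral_eq
      rw [← integral_indicator hs, ← integral_indicator hs]
      convert h using 2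
      · ext ω
        have hmem : ω ∈ X₂ ⁻¹' B ↔ β * X₁ ω + ε₂ ω ∈ B := by simp [hX₂, add_comm]
        by_cases h0 : β * X₁ ω + ε₂ ω ∈ B
        · simp [Set.indicator, hmem, h0, hY]
        · simp [Set.indicator, hmem, h0, hY]
      · ext ω
        have hmem : ω ∈ X₂ ⁻¹' B ↔ ε₂ ω + β * X₁ ω ∈ B := by simp [hX₂, add_comm]
        by_cases h0 : ε₂ ω + β * X₁ ω ∈ B
        · simp [Set.indicator, hmem, h0, hY]
        · simp [Set.indicator, hmem, h0, hY]
    have h1 : ∫ ω in X₂ ⁻¹' B, X₂ ω ∂μ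
        = ∫ ω in X₂ ⁻¹' B, Y ω ∂μ + ∫ ω in X₂ ⁻¹' B, ε₂ ω ∂μ := by
      rw [← integral_add hYi.integrableOn hint₂.integrableOn]
      exact integral_congr_ae (.of_forall fun ω => by simp [hX₂, hY])
    have h2 : ∫ ω in X₂ ⁻¹' B, Y ω ∂μ = β * ∫ ω in X₂ ⁻¹' B, X₁ ω ∂μ :=
      integral_const_mul _ _
    rw [integral_div, h1, ← key, h2]
    field_simp
    ring
  · exact ((comap_measurable X₂).div_const _).aestronglyMeasurable
end

section
/- Let X_1 be an integrable random variable that is symmetric about zero (X_1 and −X_1 have the same distribution), let f : ℝ → ℝ be a measurable even function with f(X_1) integrable, let ε_2 be a random variable independent of X_1 with E[ε_2] = 0, and let X_2 = f(X_1) + ε_2. Then almost surely E[X_1 | X_2] = 0. -/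
open MeasureTheory ProbabilityTheory

/-- If `X₁` is integrable and symmetric about zero, `f` is a measurable even function
with `f(X₁)` integrable, `ε₂` is independent of `X₁` with mean zero, and
`X₂ = f(X₁) + ε₂`, then almost surely `E[X₁ | X₂] = 0`. -/
theorem condexp_zero_of_even
    {Ω : Type*} [MeasurableSpace Ω] (μ : Measure Ω) [IsProbabilityMeasure μ]
    (X₁ ε₂ : Ω → ℝ) (hX₁ : Measurable X₁) (hε₂ : Measurable ε₂)
    (hint₁ : Integrable X₁ μ)
    (hsymm : Measure.map X₁ μ = Measure.map (fun ω => -X₁ ω) μ)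
    (f : ℝ → ℝ) (hf : Measurable f) (heven : ∀ x : ℝ, f (-x) = f x)
    (hintf : Integrable (fun ω => f (X₁ ω)) μ)
    (hint₂ : Integrable ε₂ μ) (hmean₂ : ∫ ω, ε₂ ω ∂μ = 0)
    (hindep : IndepFun X₁ ε₂ μ)
    (X₂ : Ω → ℝ) (hX₂ : X₂ = fun ω => f (X₁ ω) + ε₂ ω) :
    μ[X₁ | MeasurableSpace.comap X₂ Real.measurableSpace] =ᵐ[μ]
      fun _ => (0 : ℝ) := by
  have hX₂m : Measurable X₂ := by rw [hX₂]; exact (hf.comp hX₁).add hε₂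
  have hm := hX₂m.comap_le
  have hid : IdentDistrib (fun ω => (X₁ ω, ε₂ ω)) (fun ω => (-X₁ ω, ε₂ ω)) μ μ := by
    refine ⟨(hX₁.prodMk hε₂).aemeasurable, (hX₁.neg.prodMk hε₂).aemeasurable, ?_⟩
    have hindep' : IndepFun (fun ω => -X₁ ω) ε₂ μ :=
      hindep.comp (φ := fun x : ℝ => -x) (ψ := id) measurable_neg measurable_id
    rw [(indepFun_iff_map_prod_eq_prod_map_map hX₁.aemeasurable hε₂.aemeasurable).1 hindep,
      (indepFun_iff_map_prod_eq_prod_map_map (f := fun ω => -X₁ ω) hX₁.neg.aemeasurable hε₂.aemeasurable).1 hindep',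
      hsymm]
  symm
  refine ae_eq_condExp_of_forall_setIntegral_eq hm hint₁
    (fun s _ _ => integrableOn_zero) ?_ aestronglyMeasurable_const
  rintro s ⟨B, hB, rfl⟩ -
  have hS : MeasurableSet {p : ℝ × ℝ | f p.1 + p.2 ∈ B} :=
    ((hf.comp measurable_fst).add measurable_snd) hB
  have h := (hid.comp (u := Set.indicator {p : ℝ × ℝ | f p.1 + p.2 ∈ B} (fun p => p.1))
    (measurable_fst.indicator hS)).integral_eq
  have e1 : (Set.indicator {p : ℝ × ℝ | f p.1 + p.2 ∈ B} (fun p => p.1)) ∘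
      (fun ω => (X₁ ω, ε₂ ω)) = (X₂ ⁻¹' B).indicator X₁ := by
    ext ω
    have hw : X₂ ω = f (X₁ ω) + ε₂ ω := by rw [hX₂]
    by_cases hb : f (X₁ ω) + ε₂ ω ∈ B <;> simp [Set.indicator_apply, hw, hb]
  have e2 : (Set.indicator {p : ℝ × ℝ | f p.1 + p.2 ∈ B} (fun p => p.1)) ∘
      (fun ω => (-X₁ ω, ε₂ ω)) = (X₂ ⁻¹' B).indicator (fun ω => -X₁ ω) := by
    ext ω
    have hw : X₂ ω = f (X₁ ω) + ε₂ ω := by rw [hX₂]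
    by_cases hb : f (X₁ ω) + ε₂ ω ∈ B <;> simp [Set.indicator_apply, hw, hb, heven]
  rw [e1, e2, integral_indicator (hX₂m hB), integral_indicator (hX₂m hB), integral_neg] at h
  rw [integral_zero]
  linarith
end
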